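/- arXiv:1609.00283 — 2 statements merged into one kernel-verified Lean document; each statement's English description precedes it below -/
import Mathlib

section
/- For the weighted directed cycle digraph with all weights positive, let Q be the n×n real matrix whose first n−1 rows are the rows of Eτᵀ and whose last row is the row vector (1/w 0, 1/w 1, …, 1/w (n−1)) (i.e., 1ₙᵀ * W⁻¹). Then Q is invertible and Q * Lg * Q⁻¹ equals the block-diagonal matrix diag(Eτᵀ * W * Rᵀ, 0), i.e., the n×n matrix whose upper-left (n−1)×(n−1) block is Eτᵀ * W * Rᵀ and all of whose remaining entries are zero. -/
open Matrix

/-!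
The rows of `Eτᵀ` are the differences `x i - x (i + 1)` along the spanning path, so they vanish
only on constant vectors; hence bordering `Eτᵀ` by a row `u` gives an invertible matrix as soon as
`∑ i, u i ≠ 0`. With `u = 1` this makes the Gram matrix `Eτᵀ * Eτ` invertible: it is a diagonal
block of `N * Nᵀ`, where `N` is `Eτᵀ` bordered by `1`. Since the edges of the cycle sum to zero,
the closing edge is minus the sum of the path edges, which gives `Tτ = -1` and `E = Eτ * R`. Then
`Eτᵀ * (W * Eᵀ) = (Eτᵀ * W * Rᵀ) * Eτᵀ`, while `1ᵀ * W⁻¹ * (W * Eᵀ) = (E * 1)ᵀ = 0`, and together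
these say `Q * Lg = diag(Eτᵀ * W * Rᵀ, 0) * Q`.
-/

theorem finSumFinEquiv_symm_eq_dite {m : ℕ} (i : Fin (m + 1)) :
    finSumFinEquiv.symm i = if h : i.val < m then Sum.inl ⟨i, h⟩ else Sum.inr (0 : Fin 1) := by
  cases i using Fin.lastCases <;> simp

section LinearAlgebra

variable {K : Type*}

theorem isUnit_of_forall_mulVec_eq_zero [Field K] {ι : Type*} [Fintype ι] [DecidableEq ι]
    {M : Matrix ι ι K} (hM : ∀ x, M *ᵥ x = 0 → x = 0) : IsUnit M :=
  mulVec_injective_iff_isUnit.1 <|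
    LinearMap.ker_eq_bot.1 <| ker_mulVecLin_eq_bot_iff.2 hM

theorem inv_gram_mul_transpose_mul_mul [CommRing K] {ι κ l : Type*} [Fintype ι] [Fintype κ]
    [DecidableEq κ] {B : Matrix ι κ K} (hB : IsUnit (Bᵀ * B)) (X : Matrix κ l K) :
    (Bᵀ * B)⁻¹ * Bᵀ * (B * X) = X := by
  rw [Matrix.mul_assoc, ← Matrix.mul_assoc Bᵀ,
    nonsing_inv_mul_cancel_left _ _ ((isUnit_iff_isUnit_det _).1 hB)]

theorem fromRows_transpose_mul_mul_transpose [CommSemiring K] {ι κ l : Type*} [Fintype ι]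
    [Fintype κ] [Fintype l] (B : Matrix ι κ K) (R : Matrix κ ι K) (W : Matrix ι ι K)
    {u : Matrix l ι K} (hu : u * (W * (B * R)ᵀ) = 0) :
    fromRows Bᵀ u * (W * (B * R)ᵀ) =
      fromBlocks (Bᵀ * W * Rᵀ) 0 0 (0 : Matrix l l K) * fromRows Bᵀ u := by
  rw [fromRows_mul, hu, fromBlocks_mul_fromRows]
  simp only [transpose_mul, Matrix.mul_assoc, Matrix.zero_mul, add_zero]

end LinearAlgebra

section Incidence

variable (K : Type*) [CommRing K] (m : ℕ)

/-- Incidence matrix of the directed path `0 → 1 → ⋯ → m`, whose edge `i` goes from vertex `i` to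
vertex `i + 1`; it is the spanning in-branching of the directed cycle rooted at `m`. -/
def pathIncidence : Matrix (Fin (m + 1)) (Fin m) K :=
  of fun v i => (if v = i.castSucc then 1 else 0) - (if v = i.succ then 1 else 0)

/-- Incidence matrix of the directed cycle `0 → 1 → ⋯ → m → 0`, whose edge `i` goes from vertex `i`
to vertex `i + 1` modulo `m + 1`. For `m = 0` the only edge is a loop and the matrix is zero. -/
def cycleIncidence : Matrix (Fin (m + 1)) (Fin (m + 1)) K :=
  of fun v i => (if v = i then 1 else 0) - (if v = i + 1 then 1 else 0)

variable {K m}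

/-- The transposed incidence matrix of the path bordered by the last row `u`; it is the matrix `Q`
when `u i = 1 / w i`. It is built on the row index `Fin m ⊕ Fin 1`, transported to `Fin (m + 1)`,
so that block-matrix lemmas apply. -/
def borderedPathIncidence (u : Fin (m + 1) → K) : Matrix (Fin (m + 1)) (Fin (m + 1)) K :=
  (fromRows (pathIncidence K m)ᵀ (replicateRow (Fin 1) u)).submatrix finSumFinEquiv.symm id

theorem vecMul_pathIncidence (x : Fin (m + 1) → K) (i : Fin m) :
    (x ᵥ* pathIncidence K m) i = x i.castSucc - x i.succ := by
  simp [vecMul, dotProduct, pathIncidence, mul_sub, Finset.sum_sub_distrib]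

theorem vecMul_pathIncidence_eq_zero_iff {x : Fin (m + 1) → K} :
    x ᵥ* pathIncidence K m = 0 ↔ ∀ i, x i = x 0 := by
  simp only [funext_iff, vecMul_pathIncidence, Pi.zero_apply, sub_eq_zero]
  refine ⟨fun h i => ?_, fun h i => by rw [h, h i.succ]⟩
  induction i using Fin.induction with
  | zero => rfl
  | succ i ih => rw [← h, ih]

theorem borderedPathIncidence_apply (u : Fin (m + 1) → K) (i j : Fin (m + 1)) :
    borderedPathIncidence u i j =
      if h : i.val < m then (pathIncidence K m)ᵀ ⟨i, h⟩ j else u j := by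
  rw [borderedPathIncidence, submatrix_apply, finSumFinEquiv_symm_eq_dite]
  split_ifs <;> rfl

theorem borderedPathIncidence_mul_transpose (u : Fin (m + 1) → K) :
    borderedPathIncidence u * (borderedPathIncidence u)ᵀ =
      (fromBlocks ((pathIncidence K m)ᵀ * pathIncidence K m)
        ((pathIncidence K m)ᵀ * replicateCol (Fin 1) u)
        (replicateRow (Fin 1) (u ᵥ* pathIncidence K m))
        (replicateRow (Fin 1) u * replicateCol (Fin 1) u)).submatrix
        finSumFinEquiv.symm finSumFinEquiv.symm := by
  rw [borderedPathIncidence, transpose_submatrix, transpose_fromRows, transpose_transpose,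
    transpose_replicateRow, ← submatrix_mul _ _ _ _ _ Function.bijective_id,
    fromRows_mul_fromCols, replicateRow_vecMul]

theorem cycleIncidence_succ_apply (v i : Fin (m + 2)) :
    cycleIncidence K (m + 1) v i = if v = i then 1 else if v = i + 1 then -1 else 0 := by
  rcases eq_or_ne v i with rfl | h
  · simp [cycleIncidence]
  · simp only [cycleIncidence, of_apply, if_neg h, zero_sub]
    split_ifs <;> simp

theorem cycleIncidence_mulVec_one : cycleIncidence K m *ᵥ 1 = 0 := by
  ext v
  simp [mulVec, dotProduct, cycleIncidence, Finset.sum_sub_distrib, ← sub_eq_iff_eq_add]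

theorem cycleIncidence_submatrix_castSucc :
    (cycleIncidence K m).submatrix id Fin.castSucc = pathIncidence K m := by
  ext v i
  simp [cycleIncidence, pathIncidence]

theorem cycleIncidence_submatrix_last :
    (cycleIncidence K m).submatrix id (fun _ : Fin 1 => Fin.last m) =
      pathIncidence K m * (of fun _ _ => -1 : Matrix (Fin m) (Fin 1) K) := by
  ext v j
  have hsum : ∑ i, cycleIncidence K m v i = 0 := by
    simpa [mulVec, dotProduct] using congrFun (cycleIncidence_mulVec_one (K := K) (m := m)) v
  rw [Fin.sum_univ_castSucc] at hsum
  simpa [← cycleIncidence_submatrix_castSucc, mul_apply] using eq_neg_of_add_eq_zero_right hsum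

theorem cycleIncidence_eq_pathIncidence_mul {T : Matrix (Fin m) (Fin 1) K}
    (hT : (cycleIncidence K m).submatrix id (fun _ => Fin.last m) = pathIncidence K m * T) :
    cycleIncidence K m =
      pathIncidence K m * (fromCols 1 T).submatrix id finSumFinEquiv.symm := by
  ext v j
  cases j using Fin.lastCases with
  | last => simpa [mul_apply] using congrFun (congrFun hT v) 0
  | cast j => simp [mul_apply, ← cycleIncidence_submatrix_castSucc, one_apply]

theorem replicateRow_mul_diagonal_mul_cycleIncidence_transpose {u w : Fin (m + 1) → K}
    (huw : u * w = 1) :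
    replicateRow (Fin 1) u * (diagonal w * (cycleIncidence K m)ᵀ) = 0 := by
  have hdiag : u ᵥ* diagonal w = 1 := by
    ext i
    simpa [vecMul_diagonal] using congrFun huw i
  rw [← replicateRow_vecMul, ← vecMul_vecMul, hdiag, vecMul_transpose, cycleIncidence_mulVec_one,
    replicateRow_zero]

theorem borderedPathIncidence_mul_diagonal_mul_transpose {u w : Fin (m + 1) → K}
    (huw : u * w = 1) {R : Matrix (Fin m) (Fin (m + 1)) K}
    (hR : cycleIncidence K m = pathIncidence K m * R) :
    borderedPathIncidence u * (diagonal w * (cycleIncidence K m)ᵀ) =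
      (fromBlocks ((pathIncidence K m)ᵀ * diagonal w * Rᵀ) 0 0 0).submatrix
        finSumFinEquiv.symm finSumFinEquiv.symm * borderedPathIncidence u := by
  have hu := replicateRow_mul_diagonal_mul_cycleIncidence_transpose huw
  rw [hR] at hu ⊢
  rw [borderedPathIncidence, submatrix_mul_equiv,
    ← fromRows_transpose_mul_mul_transpose _ _ _ hu]
  rfl

end Incidence

section Invertibility

variable {K : Type*} [Field K] {m : ℕ}

theorem isUnit_borderedPathIncidence {u : Fin (m + 1) → K} (hu : ∑ i, u i ≠ 0) :
    IsUnit (borderedPathIncidence u) := by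
  refine isUnit_of_forall_mulVec_eq_zero fun x hx => ?_
  have hrows : fromRows (pathIncidence K m)ᵀ (replicateRow (Fin 1) u) *ᵥ x = 0 := by
    ext i
    simpa [borderedPathIncidence, mulVec] using congrFun hx (finSumFinEquiv i)
  rw [fromRows_mulVec] at hrows
  have hconst : ∀ i, x i = x 0 := by
    rw [← vecMul_pathIncidence_eq_zero_iff, ← mulVec_transpose]
    exact funext fun i => congrFun hrows (Sum.inl i)
  have hborder : (∑ i, u i) * x 0 = 0 := by
    simpa [mulVec, dotProduct, hconst, Finset.sum_mul] using congrFun hrows (Sum.inr 0)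
  exact funext fun i => (hconst i).trans ((mul_eq_zero.1 hborder).resolve_left hu)

theorem isUnit_pathIncidence_gram (hm : ((m + 1 : ℕ) : K) ≠ 0) :
    IsUnit ((pathIncidence K m)ᵀ * pathIncidence K m) := by
  have hunit : IsUnit (borderedPathIncidence (1 : Fin (m + 1) → K)) :=
    isUnit_borderedPathIncidence (by simpa using hm)
  have hone : (1 : Fin (m + 1) → K) ᵥ* pathIncidence K m = 0 :=
    vecMul_pathIncidence_eq_zero_iff.2 fun _ => rfl
  have hprod := hunit.mul ((isUnit_transpose _).2 hunit)
  rw [borderedPathIncidence_mul_transpose, hone, replicateRow_zero, isUnit_submatrix_equiv,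
    isUnit_fromBlocks_zero₂₁] at hprod
  exact hprod.1

end Invertibility

theorem cycle_graphLaplacian_similar_block_diagonal_general
    {K : Type*} [Field K] (m : ℕ) (hm : ((m + 2 : ℕ) : K) ≠ 0)
    (w : Fin (m + 2) → K) (hw : ∀ i, w i ≠ 0) (hsum : ∑ i, 1 / w i ≠ 0)
    (E : Matrix (Fin (m + 2)) (Fin (m + 2)) K)
    (hE : ∀ v i, E v i = if v = i then 1 else if v = i + 1 then -1 else 0)
    (A : Matrix (Fin (m + 2)) (Fin (m + 2)) K) (hA : A = 1)
    (W : Matrix (Fin (m + 2)) (Fin (m + 2)) K) (hW : W = diagonal w)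
    (Lg : Matrix (Fin (m + 2)) (Fin (m + 2)) K) (hLg : Lg = A * W * Eᵀ)
    (Eτ : Matrix (Fin (m + 2)) (Fin (m + 1)) K) (hEτ : Eτ = E.submatrix id Fin.castSucc)
    (Ec : Matrix (Fin (m + 2)) (Fin 1) K) (hEc : Ec = E.submatrix id fun _ => Fin.last (m + 1))
    (Tτ : Matrix (Fin (m + 1)) (Fin 1) K) (hTτ : Tτ = (Eτᵀ * Eτ)⁻¹ * Eτᵀ * Ec)
    (R : Matrix (Fin (m + 1)) (Fin (m + 2)) K)
    (hR : ∀ i j, R i j =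
      if j.val < m + 1 then (if i.val = j.val then 1 else 0) else Tτ i 0)
    (Q : Matrix (Fin (m + 2)) (Fin (m + 2)) K)
    (hQ : ∀ i j, Q i j = if h : i.val < m + 1 then Eτᵀ ⟨i.val, h⟩ j else 1 / w j) :
    IsUnit Q ∧
    ∀ i j, (Q * Lg * Q⁻¹) i j =
      if hi : i.val < m + 1 then
        (if hj : j.val < m + 1 then (Eτᵀ * W * Rᵀ) ⟨i.val, hi⟩ ⟨j.val, hj⟩ else 0)
      else 0 := by
  obtain rfl : E = cycleIncidence K (m + 1) := by
    ext v i
    rw [hE, cycleIncidence_succ_apply]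
  rw [cycleIncidence_submatrix_castSucc] at hEτ
  subst A W Lg Eτ
  obtain rfl : Q = borderedPathIncidence fun j => 1 / w j := by
    ext i j
    rw [hQ, borderedPathIncidence_apply]
  have hET : Ec = pathIncidence K (m + 1) * Tτ := by
    rw [hTτ, hEc, cycleIncidence_submatrix_last,
      inv_gram_mul_transpose_mul_mul (isUnit_pathIncidence_gram hm)]
  have hER : cycleIncidence K (m + 1) = pathIncidence K (m + 1) * R := by
    rw [cycleIncidence_eq_pathIncidence_mul (hEc.symm.trans hET)]
    congr 1
    ext i j
    rw [hR, submatrix_apply, finSumFinEquiv_symm_eq_dite]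
    split_ifs <;> simp [one_apply, Fin.ext_iff, *]
  have hunit : IsUnit (borderedPathIncidence fun j => 1 / w j) := isUnit_borderedPathIncidence hsum
  refine ⟨hunit, fun i j => ?_⟩
  have huw : (fun j => 1 / w j) * w = 1 := funext fun j => one_div_mul_cancel (hw j)
  rw [Matrix.one_mul, borderedPathIncidence_mul_diagonal_mul_transpose huw hER,
    mul_nonsing_inv_cancel_right _ _ ((isUnit_iff_isUnit_det _).1 hunit), submatrix_apply,
    finSumFinEquiv_symm_eq_dite, finSumFinEquiv_symm_eq_dite]
  split_ifs <;> rfl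

/-- For the weighted directed cycle digraph with positive weights, the
graph Laplacian `Lg = A * W * Eᵀ` is similar, via the matrix `Q` with rows `Eτᵀ` and
`1ₙᵀ W⁻¹`, to the block diagonal matrix `diag(Eτᵀ * W * Rᵀ, 0)`. -/
theorem cycle_graphLaplacian_similar_block_diagonal
    (n : ℕ) (hn : 2 ≤ n) (w : Fin n → ℝ) (hw : ∀ i, 0 < w i)
    (E : Matrix (Fin n) (Fin n) ℝ)
    (hE : ∀ v i, E v i = if v = i then 1 else if v = i + ⟨1, by omega⟩ then -1 else 0)
    (A : Matrix (Fin n) (Fin n) ℝ) (hA : A = 1)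
    (W : Matrix (Fin n) (Fin n) ℝ) (hW : W = Matrix.diagonal w)
    (Lg : Matrix (Fin n) (Fin n) ℝ) (hLg : Lg = A * W * Eᵀ)
    (Eτ : Matrix (Fin n) (Fin (n - 1)) ℝ)
    (hEτ : Eτ = E.submatrix id
      (fun i : Fin (n - 1) => ⟨i.val, lt_of_lt_of_le i.2 (Nat.sub_le n 1)⟩))
    (Ec : Matrix (Fin n) (Fin 1) ℝ)
    (hEc : Ec = E.submatrix id (fun _ => ⟨n - 1, by omega⟩))
    (Tτ : Matrix (Fin (n - 1)) (Fin 1) ℝ)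
    (hTτ : Tτ = (Eτᵀ * Eτ)⁻¹ * Eτᵀ * Ec)
    (R : Matrix (Fin (n - 1)) (Fin n) ℝ)
    (hR : ∀ (i : Fin (n - 1)) (j : Fin n), R i j =
      if h : j.val < n - 1 then (if i.val = j.val then 1 else 0) else Tτ i 0)
    (Q : Matrix (Fin n) (Fin n) ℝ)
    (hQ : ∀ (i j : Fin n), Q i j =
      if h : i.val < n - 1 then Eτᵀ ⟨i.val, h⟩ j else 1 / w j) :
    IsUnit Q ∧
    ∀ (i j : Fin n), (Q * Lg * Q⁻¹) i j =
      if hi : i.val < n - 1 then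
        (if hj : j.val < n - 1 then (Eτᵀ * W * Rᵀ) ⟨i.val, hi⟩ ⟨j.val, hj⟩ else 0)
      else 0 := by
  obtain ⟨m, rfl⟩ := Nat.exists_eq_add_of_le' hn
  exact cycle_graphLaplacian_similar_block_diagonal_general m (by positivity) w
    (fun i => (hw i).ne') (Finset.sum_pos (fun i _ => one_div_pos.2 (hw i)) ⟨0, by simp⟩).ne'
    E hE A hA W hW Lg hLg Eτ hEτ Ec hEc Tτ hTτ R hR Q hQ
end

section
/- For the weighted directed cycle digraph, suppose w i > 0 for every i ≠ j (where j is a fixed edge index) and the (possibly negative) weight w j satisfies w j > −1 / (Σ_{i ≠ j} 1 / w i). Then the cyclic pursuit system ẋ = −Lg x achieves consensus: 0 is a root of the characteristic polynomial of Lg of multiplicity exactly 1, and every nonzero eigenvalue λ ∈ ℂ of Lg (viewed as a complex matrix) has strictly positive real part. -/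
open Matrix

/-!
Put `d i = x i - x (i + 1)`. The entries of `d` sum to zero, and the Cauchy–Schwarz inequality shows
that the condition on `w j` makes the energy `∑ i, w i * ‖d i‖ ^ 2` positive for every nonzero such
`d`. If `Lg x` is constant, equal to `c`, then the energy of `x` is `c * ∑ i, d i = 0`, so `x` is
constant; hence `0` is a simple eigenvalue. If `Lg x = μ • x`, then summing
`μ.re * (w i * ‖d i‖ ^ 2) = ‖μ‖ ^ 2 * ⟪x i, d i⟫` and using `2 * ∑ i, ⟪x i, d i⟫ = ∑ i, ‖d i‖ ^ 2`
gives `μ.re` the sign of the energy. The successor map may be any permutation: then the condition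
concerns the cycle of `j`, and the multiplicity of `0` is the number of cycles.
-/

open Equiv (Perm)

lemma maxGenEigenspace_zero_eq_ker {R M : Type*} [CommRing R] [AddCommGroup M] [Module R M]
    {f : Module.End R M} (hf : ∀ x, f (f x) = 0 → f x = 0) :
    f.maxGenEigenspace 0 = LinearMap.ker f := by
  have ker_of_pow (k : ℕ) : ∀ x, (f ^ k) x = 0 → f x = 0 := by
    induction k with
    | zero => intro x hx; rw [show x = 0 from hx, map_zero]
    | succ k ih =>
      intro x hx
      rw [pow_succ, Module.End.mul_apply] at hx
      exact hf x (ih (f x) hx)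
  ext x
  simp only [Module.End.mem_maxGenEigenspace, zero_smul, sub_zero, LinearMap.mem_ker]
  exact ⟨fun ⟨k, hk⟩ ↦ ker_of_pow k x hk, fun hx ↦ ⟨1, by rwa [pow_one]⟩⟩

variable {ι : Type*}

section Permutation

lemma comp_perm_eq_self_iff {α : Type*} {σ : Perm ι} {f : ι → α} :
    f ∘ σ = f ↔ ∀ i k, σ.SameCycle i k → f i = f k := by
  refine ⟨fun h ↦ ?_, fun h ↦ funext fun i ↦ (h i (σ i) ⟨1, by simp⟩).symm⟩
  rintro i _ ⟨m, rfl⟩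
  have apply_eq (i : ι) : f (σ i) = f i := congrFun h i
  induction m using Int.induction_on with
  | zero => simp
  | succ m ih => rw [add_comm, _root_.zpow_one_add, Perm.mul_apply, apply_eq, ← ih]
  | pred m ih =>
    rw [ih, ← apply_eq ((σ ^ (-(m : ℤ) - 1)) i), ← Perm.mul_apply, ← _root_.zpow_one_add,
      add_sub_cancel]

lemma exists_comp_mk_sameCycle_iff {α : Type*} {σ : Perm ι} {f : ι → α} :
    (∃ g, g ∘ Quotient.mk (Perm.SameCycle.setoid σ) = f) ↔ f ∘ σ = f := by
  rw [comp_perm_eq_self_iff]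
  constructor
  · rintro ⟨g, rfl⟩ i k hik
    exact congrArg g (Quotient.sound hik)
  · exact fun h ↦ ⟨Quotient.lift f h, rfl⟩

lemma card_quotient_sameCycle_eq_one [Nonempty ι] {σ : Perm ι} (hσ : ∀ i k, σ.SameCycle i k) :
    Nat.card (Quotient (Perm.SameCycle.setoid σ)) = 1 := by
  rw [Nat.card_eq_one_iff_unique]
  refine ⟨⟨fun a b ↦ Quotient.inductionOn₂ a b fun i k ↦ Quotient.sound (hσ i k)⟩, ?_⟩
  exact ‹Nonempty ι›.map (Quotient.mk _)

lemma sameCycle_finRotate {n : ℕ} (hn : 2 ≤ n) (i k : Fin n) : (finRotate n).SameCycle i k := by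
  have moved (i : Fin n) : finRotate n i ≠ i := by
    rw [← Perm.mem_support, support_finRotate_of_le hn]
    exact Finset.mem_univ i
  exact (isCycle_finRotate_of_le hn).sameCycle (moved i) (moved k)

lemma sum_sub_comp_perm [Fintype ι] {V : Type*} [AddCommGroup V] (σ : Perm ι) (f : ι → V) :
    ∑ i, (f i - f (σ i)) = 0 := by
  rw [Finset.sum_sub_distrib, Equiv.sum_comp σ f, sub_self]

lemma sum_sameCycle_sub_comp_perm [Fintype ι] [DecidableEq ι] {V : Type*} [AddCommGroup V]
    (σ : Perm ι) (j : ι) (f : ι → V) :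
    ∑ i with σ.SameCycle j i, (f i - f (σ i)) = 0 := by
  rw [Finset.sum_sub_distrib, sub_eq_zero, eq_comm]
  exact Finset.sum_equiv σ (by simp) fun _ _ ↦ rfl

lemma two_mul_sum_inner_sub_comp_perm [Fintype ι] {V : Type*} [NormedAddCommGroup V]
    [InnerProductSpace ℝ V] (σ : Perm ι) (x : ι → V) :
    2 * ∑ i, inner ℝ (x i) (x i - x (σ i)) = ∑ i, ‖x i - x (σ i)‖ ^ 2 := by
  have polarization (i : ι) : 2 * inner ℝ (x i) (x i - x (σ i)) =
      ‖x i - x (σ i)‖ ^ 2 + (‖x i‖ ^ 2 - ‖x (σ i)‖ ^ 2) := by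
    rw [norm_sub_sq_real, inner_sub_right, real_inner_self_eq_norm_sq]
    ring
  rw [Finset.mul_sum, Finset.sum_congr rfl fun i _ ↦ polarization i, Finset.sum_add_distrib,
    sum_sub_comp_perm σ fun i ↦ ‖x i‖ ^ 2, add_zero]

end Permutation

section Energy

lemma norm_sum_sq_le_sum_inv_mul_sum {V : Type*} [SeminormedAddCommGroup V] {s : Finset ι}
    {w : ι → ℝ} (hw : ∀ i ∈ s, 0 < w i) (d : ι → V) :
    ‖∑ i ∈ s, d i‖ ^ 2 ≤ (∑ i ∈ s, (w i)⁻¹) * ∑ i ∈ s, w i * ‖d i‖ ^ 2 :=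
  calc ‖∑ i ∈ s, d i‖ ^ 2 ≤ (∑ i ∈ s, ‖d i‖) ^ 2 := by gcongr; exact norm_sum_le s d
    _ ≤ (∑ i ∈ s, (w i)⁻¹) * ∑ i ∈ s, w i * ‖d i‖ ^ 2 :=
      Finset.sum_sq_le_sum_mul_sum_of_sq_le_mul s (fun i hi ↦ (inv_pos.2 (hw i hi)).le)
        (fun i hi ↦ mul_nonneg (hw i hi).le (sq_nonneg _))
        fun i hi ↦ (inv_mul_cancel_left₀ (hw i hi).ne' _).ge

variable [Fintype ι] {w : ι → ℝ} {j : ι}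

lemma sum_mul_norm_sq_pos {V : Type*} [NormedAddCommGroup V] {s : Finset ι} (hjs : j ∉ s)
    (hw : ∀ i, i ≠ j → 0 < w i) (hwj : 0 < 1 + w j * ∑ i ∈ s, (w i)⁻¹)
    {d : ι → V} (hsum : d j + ∑ i ∈ s, d i = 0) (hd : d ≠ 0) :
    0 < ∑ i, w i * ‖d i‖ ^ 2 := by
  classical
  have s_ne {i : ι} (hi : i ∈ s) : i ≠ j := ne_of_mem_of_not_mem hi hjs
  have term_nonneg : ∀ i ∈ Finset.univ.erase j, 0 ≤ w i * ‖d i‖ ^ 2 := fun i hi ↦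
    mul_nonneg (hw i (Finset.ne_of_mem_erase hi)).le (sq_nonneg _)
  have hcs : ‖d j‖ ^ 2 ≤ (∑ i ∈ s, (w i)⁻¹) * ∑ i ∈ Finset.univ.erase j, w i * ‖d i‖ ^ 2 := by
    rw [eq_neg_of_add_eq_zero_left hsum, norm_neg]
    refine (norm_sum_sq_le_sum_inv_mul_sum (fun i hi ↦ hw i (s_ne hi)) d).trans ?_
    refine mul_le_mul_of_nonneg_left ?_
      (Finset.sum_nonneg fun i hi ↦ (inv_pos.2 (hw i (s_ne hi))).le)
    exact Finset.sum_le_sum_of_subset_of_nonneg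
      (fun i hi ↦ Finset.mem_erase.2 ⟨s_ne hi, Finset.mem_univ i⟩) fun i hi _ ↦ term_nonneg i hi
  have hpos : 0 < ∑ i ∈ Finset.univ.erase j, w i * ‖d i‖ ^ 2 := by
    refine (Finset.sum_nonneg term_nonneg).lt_of_ne' fun h0 ↦ hd ?_
    have eq_zero_of_ne {i : ι} (hi : i ≠ j) : d i = 0 := by
      have := (Finset.sum_eq_zero_iff_of_nonneg term_nonneg).1 h0 i (by simp [hi])
      simpa [(hw i hi).ne'] using this
    have dj_eq_zero : d j = 0 := by
      simpa [Finset.sum_eq_zero fun _ hi ↦ eq_zero_of_ne (s_ne hi)] using hsum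
    funext i
    obtain rfl | hi := eq_or_ne i j
    exacts [dj_eq_zero, eq_zero_of_ne hi]
  rw [← Finset.add_sum_erase _ _ (Finset.mem_univ j)]
  rcases le_or_gt 0 (w j) with h | h
  · positivity
  · nlinarith [mul_le_mul_of_nonpos_left hcs h.le, mul_pos hwj hpos]

variable [DecidableEq ι] {σ : Perm ι}

lemma sum_mul_norm_sub_comp_perm_sq_pos {V : Type*} [NormedAddCommGroup V]
    (hw : ∀ i, i ≠ j → 0 < w i)
    (hwj : 0 < 1 + w j * ∑ i with i ≠ j ∧ σ.SameCycle j i, (w i)⁻¹)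
    {x : ι → V} (hx : x ∘ σ ≠ x) :
    0 < ∑ i, w i * ‖x i - x (σ i)‖ ^ 2 := by
  refine sum_mul_norm_sq_pos (by simp) hw hwj (d := fun i ↦ x i - x (σ i)) ?_ fun h ↦ hx ?_
  · have hfilter : ({i | i ≠ j ∧ σ.SameCycle j i} : Finset ι) =
        ({i | σ.SameCycle j i} : Finset ι).erase j := by ext; simp
    rw [hfilter, Finset.add_sum_erase _ (fun i ↦ x i - x (σ i))
      (by simp [Perm.SameCycle.refl]), sum_sameCycle_sub_comp_perm]
  · exact funext fun i ↦ (sub_eq_zero.1 (congrFun h i)).symm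

end Energy

section Laplacian

variable [Fintype ι] [DecidableEq ι]

/-- The out-degree Laplacian of the weighted functional digraph of a permutation `σ`, whose edge
leaving `i` has head `σ i` and weight `w i`; its graph is a disjoint union of directed cycles. -/
def permLaplacian {R : Type*} [Ring R] (σ : Perm ι) (w : ι → R) : Matrix ι ι R :=
  diagonal w * (1 - σ.permMatrix R)

lemma permLaplacian_mulVec {R : Type*} [CommRing R] (σ : Perm ι) (w x : ι → R) (i : ι) :
    (permLaplacian σ w *ᵥ x) i = w i * (x i - x (σ i)) := by
  rw [permLaplacian, ← mulVec_mulVec, mulVec_diagonal, sub_mulVec, one_mulVec, permMatrix_mulVec,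
    Pi.sub_apply, Function.comp_apply]

lemma permLaplacian_map {R S : Type*} [Ring R] [Ring S] (f : R →+* S) (σ : Perm ι) (w : ι → R) :
    (permLaplacian σ w).map f = permLaplacian σ (f ∘ w) := by
  ext i k
  simp [permLaplacian, diagonal_mul, one_apply, PEquiv.toMatrix_apply, apply_ite f]

variable {σ : Perm ι} {w : ι → ℝ} {j : ι}

lemma comp_perm_eq_self_of_permLaplacian_mulVec (hw : ∀ i, i ≠ j → 0 < w i)
    (hwj : 0 < 1 + w j * ∑ i with i ≠ j ∧ σ.SameCycle j i, (w i)⁻¹)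
    {x : ι → ℝ} (hx : (permLaplacian σ w *ᵥ x) ∘ σ = permLaplacian σ w *ᵥ x) :
    x ∘ σ = x := by
  by_contra hne
  refine (sum_mul_norm_sub_comp_perm_sq_pos hw hwj hne).ne' ?_
  set y := permLaplacian σ w *ᵥ x with hy
  have hterm (i : ι) : w i * ‖x i - x (σ i)‖ ^ 2 = y i * x i - y (σ i) * x (σ i) := by
    rw [show y (σ i) = y i from congrFun hx i, hy, permLaplacian_mulVec, Real.norm_eq_abs, sq_abs]
    ring
  rw [Finset.sum_congr rfl fun i _ ↦ hterm i]
  exact sum_sub_comp_perm σ (y * x)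

lemma permLaplacian_mulVec_eq_zero_iff (hw : ∀ i, i ≠ j → 0 < w i)
    (hwj : 0 < 1 + w j * ∑ i with i ≠ j ∧ σ.SameCycle j i, (w i)⁻¹) {x : ι → ℝ} :
    permLaplacian σ w *ᵥ x = 0 ↔ x ∘ σ = x := by
  refine ⟨fun h ↦ comp_perm_eq_self_of_permLaplacian_mulVec hw hwj (by rw [h]; rfl), fun h ↦ ?_⟩
  funext i
  rw [permLaplacian_mulVec, show x (σ i) = x i from congrFun h i, sub_self, mul_zero, Pi.zero_apply]

lemma finrank_ker_permLaplacian (hw : ∀ i, i ≠ j → 0 < w i)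
    (hwj : 0 < 1 + w j * ∑ i with i ≠ j ∧ σ.SameCycle j i, (w i)⁻¹) :
    Module.finrank ℝ (LinearMap.ker (toLin' (permLaplacian σ w))) =
      Nat.card (Quotient (Perm.SameCycle.setoid σ)) := by
  have hker : LinearMap.ker (toLin' (permLaplacian σ w)) =
      LinearMap.range (LinearMap.funLeft ℝ ℝ (Quotient.mk (Perm.SameCycle.setoid σ))) := by
    ext x
    rw [LinearMap.mem_ker, toLin'_apply, permLaplacian_mulVec_eq_zero_iff hw hwj,
      ← exists_comp_mk_sameCycle_iff]
    rfl
  have := Fintype.ofFinite (Quotient (Perm.SameCycle.setoid σ))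
  rw [hker, LinearMap.finrank_range_of_inj
    (LinearMap.funLeft_injective_of_surjective ℝ ℝ _ Quotient.mk_surjective),
    Module.finrank_fintype_fun_eq_card, Nat.card_eq_fintype_card]

theorem rootMultiplicity_zero_charpoly_permLaplacian (hw : ∀ i, i ≠ j → 0 < w i)
    (hwj : 0 < 1 + w j * ∑ i with i ≠ j ∧ σ.SameCycle j i, (w i)⁻¹) :
    (permLaplacian σ w).charpoly.rootMultiplicity 0 =
      Nat.card (Quotient (Perm.SameCycle.setoid σ)) := by
  have ker_sq (x : ι → ℝ) (hx : toLin' (permLaplacian σ w) (toLin' (permLaplacian σ w) x) = 0) :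
      toLin' (permLaplacian σ w) x = 0 := by
    simp only [toLin'_apply, permLaplacian_mulVec_eq_zero_iff hw hwj] at hx ⊢
    exact comp_perm_eq_self_of_permLaplacian_mulVec hw hwj hx
  rw [← charpoly_toLin', ← LinearMap.finrank_maxGenEigenspace_eq,
    maxGenEigenspace_zero_eq_ker ker_sq, finrank_ker_permLaplacian hw hwj]

lemma map_ofReal_permLaplacian_mulVec_eq_smul_iff {μ : ℂ} {x : ι → ℂ} :
    (permLaplacian σ w).map Complex.ofReal *ᵥ x = μ • x ↔
      ∀ i, (w i : ℂ) * (x i - x (σ i)) = μ * x i := by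
  rw [funext_iff, show (permLaplacian σ w).map Complex.ofReal = permLaplacian σ (fun i ↦ (w i : ℂ))
    from permLaplacian_map Complex.ofRealHom σ w]
  simp only [permLaplacian_mulVec, Pi.smul_apply, smul_eq_mul]

lemma re_mul_mul_norm_sq_eq_norm_sq_mul_inner {μ z d : ℂ} {a : ℝ} (h : a * d = μ * z) :
    μ.re * (a * ‖d‖ ^ 2) = ‖μ‖ ^ 2 * inner ℝ z d := by
  have hconj : a * starRingEnd ℂ d = starRingEnd ℂ μ * starRingEnd ℂ z := by
    simpa using congrArg (starRingEnd ℂ) h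
  have complex_identity :
      μ * ((a * ‖d‖ ^ 2 : ℝ) : ℂ) = ((‖μ‖ ^ 2 : ℝ) : ℂ) * (starRingEnd ℂ z * d) := by
    push_cast
    rw [← Complex.conj_mul' d, ← Complex.mul_conj' μ]
    linear_combination μ * d * hconj
  have := congrArg Complex.re complex_identity
  rwa [Complex.re_mul_ofReal, Complex.re_ofReal_mul, mul_comm _ d, ← Complex.inner] at this

theorem re_pos_of_permLaplacian_mulVec_eq_smul (hw : ∀ i, i ≠ j → 0 < w i)
    (hwj : 0 < 1 + w j * ∑ i with i ≠ j ∧ σ.SameCycle j i, (w i)⁻¹)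
    {μ : ℂ} (hμ : μ ≠ 0) {x : ι → ℂ} (hx : x ≠ 0)
    (heig : (permLaplacian σ w).map Complex.ofReal *ᵥ x = μ • x) : 0 < μ.re := by
  rw [map_ofReal_permLaplacian_mulVec_eq_smul_iff] at heig
  obtain ⟨i₀, hi₀⟩ : ∃ i, x i - x (σ i) ≠ 0 := by
    by_contra! h
    exact hx (funext fun i ↦ by simpa [h, hμ] using heig i)
  have hinner : 0 < ∑ i, inner ℝ (x i) (x i - x (σ i)) := by
    refine pos_of_mul_pos_right (a := (2 : ℝ)) ?_ zero_le_two
    rw [two_mul_sum_inner_sub_comp_perm]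
    exact Finset.sum_pos' (fun i _ ↦ sq_nonneg _) ⟨i₀, Finset.mem_univ _, by positivity⟩
  have henergy : 0 < ∑ i, w i * ‖x i - x (σ i)‖ ^ 2 :=
    sum_mul_norm_sub_comp_perm_sq_pos hw hwj fun h ↦ hi₀ (sub_eq_zero.2 (congrFun h i₀).symm)
  have hre : μ.re * ∑ i, w i * ‖x i - x (σ i)‖ ^ 2 =
      ‖μ‖ ^ 2 * ∑ i, inner ℝ (x i) (x i - x (σ i)) := by
    simp only [Finset.mul_sum, re_mul_mul_norm_sq_eq_norm_sq_mul_inner (heig _)]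
  refine pos_of_mul_pos_left ?_ henergy.le
  rw [hre]
  positivity

/-- The condition on `w j` is `w j > -(1 / ∑ …)` cleared of its denominator, so that it does not
restrict `w j` when the edge `j` is a loop. -/
theorem cycle_consensus_robust_weight_perturbation_general (hw : ∀ i, i ≠ j → 0 < w i)
    (hwj : 0 < 1 + w j * ∑ i with i ≠ j ∧ σ.SameCycle j i, (w i)⁻¹) :
    (permLaplacian σ w).charpoly.rootMultiplicity 0 =
        Nat.card (Quotient (Perm.SameCycle.setoid σ)) ∧
      ∀ μ : ℂ, μ ≠ 0 →
        (∃ x : ι → ℂ, x ≠ 0 ∧ (permLaplacian σ w).map Complex.ofReal *ᵥ x = μ • x) → 0 < μ.re :=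
  ⟨rootMultiplicity_zero_charpoly_permLaplacian hw hwj,
    fun _ hμ ⟨_, hx, heig⟩ ↦ re_pos_of_permLaplacian_mulVec_eq_smul hw hwj hμ hx heig⟩

end Laplacian

section Cycle

variable {n : ℕ}

lemma transpose_eq_one_sub_permMatrix_finRotate (hn : 2 ≤ n) {E : Matrix (Fin n) (Fin n) ℝ}
    (hE : ∀ v i, E v i = if v = i then 1 else if v = i + ⟨1, hn⟩ then -1 else 0) :
    Eᵀ = 1 - (finRotate n).permMatrix ℝ := by
  obtain ⟨m, rfl⟩ := Nat.exists_eq_add_of_le' hn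
  ext i v
  rw [transpose_apply, hE, show (⟨1, hn⟩ : Fin (m + 2)) = 1 from rfl]
  obtain rfl | hv := eq_or_ne v i
  · simp [PEquiv.toMatrix_apply]
  · obtain rfl | hv' := eq_or_ne v (i + 1)
    · simp [PEquiv.toMatrix_apply]
    · simp [PEquiv.toMatrix_apply, hv, hv', hv.symm, hv'.symm]

lemma one_add_mul_sum_inv_sameCycle_finRotate_pos (hn : 2 ≤ n) {w : Fin n → ℝ} {j : Fin n}
    (hw : ∀ i, i ≠ j → 0 < w i) (hwj : w j > -(1 / ∑ i with i ≠ j, 1 / w i)) :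
    0 < 1 + w j * ∑ i with i ≠ j ∧ (finRotate n).SameCycle j i, (w i)⁻¹ := by
  have : Nontrivial (Fin n) := Fin.nontrivial_iff_two_le.2 hn
  obtain ⟨k, hk⟩ := exists_ne j
  simp only [one_div] at hwj
  simp only [sameCycle_finRotate hn, and_true]
  have hpos : 0 < ∑ i with i ≠ j, (w i)⁻¹ :=
    Finset.sum_pos (fun i hi ↦ inv_pos.2 (hw i (by simpa using hi))) ⟨k, by simpa using hk⟩
  rwa [gt_iff_lt, neg_lt_iff_pos_add', ← mul_pos_iff_of_pos_right hpos, add_mul,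
    inv_mul_cancel₀ hpos.ne'] at hwj

end Cycle

/-- For the weighted directed cycle digraph with `w i > 0` for all `i ≠ j`
and `w j > −1 / (Σ_{i ≠ j} 1/(w i))`, the cyclic pursuit system `ẋ = −Lg x` achieves
consensus: 0 is a simple root of the characteristic polynomial of `Lg`, and every
nonzero complex eigenvalue of `Lg` has strictly positive real part. -/
theorem cycle_consensus_robust_weight_perturbation
    (n : ℕ) (hn : 2 ≤ n) (w : Fin n → ℝ) (j : Fin n)
    (hw : ∀ i : Fin n, i ≠ j → 0 < w i)
    (hwj : w j > -(1 / ∑ i ∈ Finset.univ.filter (fun i : Fin n => i ≠ j), 1 / w i))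
    (E : Matrix (Fin n) (Fin n) ℝ)
    (hE : ∀ v i, E v i = if v = i then 1 else if v = i + ⟨1, by omega⟩ then -1 else 0)
    (A : Matrix (Fin n) (Fin n) ℝ) (hA : A = 1)
    (W : Matrix (Fin n) (Fin n) ℝ) (hW : W = Matrix.diagonal w)
    (Lg : Matrix (Fin n) (Fin n) ℝ) (hLg : Lg = A * W * Eᵀ) :
    Polynomial.rootMultiplicity 0 Lg.charpoly = 1 ∧
    ∀ μ : ℂ, μ ≠ 0 →
      (∃ x : Fin n → ℂ, x ≠ 0 ∧ (Lg.map Complex.ofReal).mulVec x = μ • x) →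
      0 < μ.re := by
  have : Nonempty (Fin n) := ⟨j⟩
  have hLap : Lg = permLaplacian (finRotate n) w := by
    rw [hLg, hA, hW, one_mul, transpose_eq_one_sub_permMatrix_finRotate hn hE, permLaplacian]
  rw [hLap, ← card_quotient_sameCycle_eq_one (sameCycle_finRotate hn)]
  exact cycle_consensus_robust_weight_perturbation_general hw
    (one_add_mul_sum_inv_sameCycle_finRotate_pos hn hw hwj)
end
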